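/- Let ρ1 and ρ2 be existential rules and Ia ⊆ Ib interpretations such that Ib is obtained by applying ρ1 for match h1 extended to h1' and Ia is obtained by applying ρ2 for match h2 extended to h2'. Let hA be an alternative match of h2' and ρ2 on Ib that is not an alternative match of h2 and ρ2 on Ĩb = Ib ∖ h1'(head(ρ1)). Then there exist partitions head(ρ2) = H2 ∪ H̄2 and head(ρ1) = H1 ∪ H̄1 with H2 nonempty such that hA(h2'(H2)) = h1'(H1) and hA(h2'(H̄2)) ⊆ Ĩb. -/

import Mathlib

/-! Common formalization of existential rules, homomorphisms, substitutions,
unifiers, rule applications, positive reliances and restraints. -/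

/-- Terms: variables, constants, labelled nulls (each indexed by a natural number). -/
inductive Term where
  | var : ℕ → Term
  | const : ℕ → Term
  | null : ℕ → Term
deriving DecidableEq

namespace Term
def isVar : Term → Prop | var _ => True | _ => False
def isConst : Term → Prop | const _ => True | _ => False
def isNull : Term → Prop | null _ => True | _ => False
end Term

/-- An atom is a predicate name applied to a list of terms (arity = list length). -/
structure Atom where
  pred : ℕ
  args : List Term
deriving DecidableEq

/-- Applying a function on terms to an atom, term-wise. -/
def Atom.map (f : Term → Term) (a : Atom) : Atom := ⟨a.pred, a.args.map f⟩

/-- Applying a function on terms to a set of atoms. -/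
def mapSet (f : Term → Term) (A : Set Atom) : Set Atom := (Atom.map f) '' A

/-- The terms occurring in a set of atoms. -/
def termsOf (A : Set Atom) : Set Term := {t | ∃ a ∈ A, t ∈ a.args}

/-- An interpretation is a set of atoms containing no variables. -/
def Interp (I : Set Atom) : Prop := ∀ t ∈ termsOf I, ¬ t.isVar

/-- A homomorphism from the atom set `A` to `I`: it fixes all constants and maps
every atom of `A` into `I`. -/
def isHom (h : Term → Term) (A I : Set Atom) : Prop :=
  (∀ c : ℕ, h (.const c) = .const c) ∧ ∀ a ∈ A, a.map h ∈ I

/-- A strong homomorphism additionally reflects atoms (over the terms of `A`). -/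
def isStrongHom (h : Term → Term) (A I : Set Atom) : Prop :=
  isHom h A I ∧ ∀ a : Atom, (∀ t ∈ a.args, t ∈ termsOf A) → a.map h ∈ I → a ∈ A

/-- A substitution fixes all constants and nulls. -/
def isSubst (θ : Term → Term) : Prop :=
  (∀ c : ℕ, θ (.const c) = .const c) ∧ (∀ n : ℕ, θ (.null n) = .null n)

/-- Atom mappings are partial functions on atoms. -/
def amDom (m : Atom → Option Atom) : Set Atom := {a | (m a).isSome}
def amRan (m : Atom → Option Atom) : Set Atom := {b | ∃ a, m a = some b}
def amAtoms (m : Atom → Option Atom) : Set Atom := amDom m ∪ amRan m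

/-- θ is a unifier for the atom mapping m. -/
def isUnifier (θ : Term → Term) (m : Atom → Option Atom) : Prop :=
  isSubst θ ∧ ∀ a b : Atom, m a = some b → a.map θ = b.map θ

/-- μ is a most general unifier for m. -/
def isMGU (μ : Term → Term) (m : Atom → Option Atom) : Prop :=
  isUnifier μ m ∧ ∀ ν, isUnifier ν m → ∃ σ, isSubst σ ∧ ∀ t, σ (μ t) = ν t

/-- An existential rule, given by its body and head (finite sets of atoms).
The universally quantified variables are those occurring in the body;
the existentially quantified ones are the head variables not occurring in the body. -/
structure Rule where
  body : Finset Atom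
  head : Finset Atom

/-- The variables occurring in a set of atoms. -/
def varsOf (A : Set Atom) : Set Term := {t ∈ termsOf A | t.isVar}

def Rule.uvars (ρ : Rule) : Set Term := varsOf ↑ρ.body
def Rule.evars (ρ : Rule) : Set Term := varsOf ↑ρ.head \ varsOf ↑ρ.body
def Rule.frontier (ρ : Rule) : Set Term := varsOf ↑ρ.body ∩ varsOf ↑ρ.head
def Rule.terms (ρ : Rule) : Set Term := termsOf ((↑ρ.body : Set Atom) ∪ ↑ρ.head)

/-- Rules contain no nulls (their atoms use only constants and variables). -/
def Rule.wf (ρ : Rule) : Prop := ∀ t ∈ ρ.terms, ¬ t.isNull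

/-- A match of ρ in I is a homomorphism from its body to I. -/
def isMatch (h : Term → Term) (ρ : Rule) (I : Set Atom) : Prop := isHom h ↑ρ.body I

/-- A match is satisfied if some homomorphism from the head to I agrees with it
on all frontier variables. -/
def satisfiedMatch (h : Term → Term) (ρ : Rule) (I : Set Atom) : Prop :=
  ∃ h', isHom h' ↑ρ.head I ∧ ∀ y ∈ ρ.frontier, h' y = h y

/-- h' extends the match h of ρ on I by mapping the existential variables to
distinct nulls not occurring in I. -/
def extendsMatch (ρ : Rule) (I : Set Atom) (h h' : Term → Term) : Prop :=
  (∀ t, t ∉ ρ.evars → h' t = h t) ∧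
  (∀ z ∈ ρ.evars, ∃ n : ℕ, h' z = .null n ∧ Term.null n ∉ termsOf I) ∧
  (∀ z₁ ∈ ρ.evars, ∀ z₂ ∈ ρ.evars, h' z₁ = h' z₂ → z₁ = z₂)

/-- J is obtained from the interpretation I by applying ρ for the (unsatisfied)
match h extended to h'. -/
def obtainedBy (ρ : Rule) (I : Set Atom) (h h' : Term → Term) (J : Set Atom) : Prop :=
  Interp I ∧ isMatch h ρ I ∧ ¬ satisfiedMatch h ρ I ∧ extendsMatch ρ I h h' ∧
  J = I ∪ mapSet h' ↑ρ.head

/-- The witnesses for ρ₂ positively relying on ρ₁ (Definition 1). -/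
def posReliesVia (ρ₁ ρ₂ : Rule) (Ia Ib : Set Atom) (h₁ h₁' h₂ : Term → Term) : Prop :=
  Ia ⊆ Ib ∧ obtainedBy ρ₁ Ia h₁ h₁' Ib ∧
  isMatch h₂ ρ₂ Ib ∧ ¬ satisfiedMatch h₂ ρ₂ Ib ∧ ¬ isMatch h₂ ρ₂ Ia

/-- ρ₂ positively relies on ρ₁, written ρ₁ ≺⁺ ρ₂. -/
def posRelies (ρ₁ ρ₂ : Rule) : Prop :=
  ∃ Ia Ib h₁ h₁' h₂, posReliesVia ρ₁ ρ₂ Ia Ib h₁ h₁' h₂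

/-- hA is an alternative match of the match h (extended to h') of ρ on Ib (Definition 2). -/
def isAltMatch (ρ : Rule) (h h' : Term → Term) (Ib : Set Atom) (hA : Term → Term) : Prop :=
  isHom hA (mapSet h' ↑ρ.head) Ib ∧
  (∀ t ∈ termsOf (mapSet h ↑ρ.body), hA t = t) ∧
  ∃ n : ℕ, Term.null n ∈ termsOf (mapSet h' ↑ρ.head) ∧
    Term.null n ∉ termsOf (mapSet hA (mapSet h' ↑ρ.head))

/-- The witnesses for ρ₁ restraining ρ₂ (Definition 3). -/
def restrainsVia (ρ₁ ρ₂ : Rule) (Ia Ib : Set Atom)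
    (h₁ h₁' h₂ h₂' hA : Term → Term) : Prop :=
  ∃ Ja Jb : Set Atom, Ia ⊆ Ib ∧
    obtainedBy ρ₁ Jb h₁ h₁' Ib ∧ obtainedBy ρ₂ Ja h₂ h₂' Ia ∧
    isAltMatch ρ₂ h₂ h₂' Ib hA ∧
    ¬ isAltMatch ρ₂ h₂ h₂' (Ib \ mapSet h₁' ↑ρ₁.head) hA

/-- ρ₁ restrains ρ₂, written ρ₁ ≺□ ρ₂. -/
def restrains (ρ₁ ρ₂ : Rule) : Prop :=
  ∃ Ia Ib h₁ h₁' h₂ h₂' hA, restrainsVia ρ₁ ρ₂ Ia Ib h₁ h₁' h₂ h₂' hA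

/-- The fixed substitution ω: it maps each variable of Vex to a null and each
variable of Vall to a constant, injectively, fixing everything else, and its
values on Vall ∪ Vex avoid the terms in `fresh`. -/
def isOmega (ω : Term → Term) (Vall Vex : Set Term) (fresh : Set Term) : Prop :=
  isSubst ω ∧
  (∀ v ∈ Vex, (ω v).isNull) ∧
  (∀ v ∈ Vall, (ω v).isConst) ∧
  (∀ t, t ∉ Vall ∪ Vex → ω t = t) ∧
  (∀ u ∈ Vall ∪ Vex, ∀ v ∈ Vall ∪ Vex, ω u = ω v → u = v) ∧
  (∀ v ∈ Vall ∪ Vex, ω v ∉ fresh)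

/-- For a substitution θ, `away θ S` is the substitution that agrees with θ
outside of S and is the identity on S.  Thus θ∀ = `away θ Vex` and
θ∃ = `away θ Vall`. -/
noncomputable def away (θ : Term → Term) (S : Set Term) : Term → Term :=
  fun t => @ite _ (t ∈ S) (Classical.propDecidable _) t (θ t)

/-- I ⊨ ∃ Z. ψ : there is a homomorphism ψ → I mapping every term of ψ other
than the (existential) variables in Z to itself. -/
def models (I : Set Atom) (ψ : Set Atom) (Z : Set Term) : Prop :=
  ∃ h : Term → Term, (∀ a ∈ ψ, a.map h ∈ I) ∧ ∀ t ∈ termsOf ψ, t ∉ Z → h t = t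

/-- No null occurs in the atom set A. -/
def noNullsIn (A : Set Atom) : Prop := ∀ t ∈ termsOf A, ¬ t.isNull

section ImagePartition

variable {α β γ : Type*} {f : α → γ} {g : β → γ} {A : Set α} {B : Set β}

-- Both sides are the intersection of the images of `A` and `B`.
theorem image_inter_preimage_image_comm :
    f '' (A ∩ f ⁻¹' (g '' B)) = g '' (B ∩ g ⁻¹' (f '' A)) := by
  rw [Set.image_inter_preimage, Set.image_inter_preimage, Set.inter_comm]

theorem exists_partition_image_eq_image {I : Set γ}
    (hI : f '' A ⊆ I) (hAB : ¬ Disjoint (f '' A) (g '' B)) :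
    ∃ A₁ A₂ : Set α, ∃ B₁ B₂ : Set β,
      A₁ ∪ A₂ = A ∧ A₁ ∩ A₂ = ∅ ∧ B₁ ∪ B₂ = B ∧ B₁ ∩ B₂ = ∅ ∧
      A₁.Nonempty ∧ f '' A₁ = g '' B₁ ∧ f '' A₂ ⊆ I \ g '' B := by
  refine ⟨A ∩ f ⁻¹' (g '' B), A \ f ⁻¹' (g '' B), B ∩ g ⁻¹' (f '' A), B \ g ⁻¹' (f '' A),
    Set.inter_union_sdiff _ _, Set.disjoint_sdiff_inter.symm.inter_eq,
    Set.inter_union_sdiff _ _, Set.disjoint_sdiff_inter.symm.inter_eq,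
    Set.image_inter_nonempty_iff.mp (Set.not_disjoint_iff_nonempty_inter.mp hAB),
    image_inter_preimage_image_comm, ?_⟩
  rw [Set.image_sdiff_preimage]
  exact Set.sdiff_subset_sdiff_left hI

end ImagePartition

section Homomorphisms

variable {h : Term → Term} {A I : Set Atom}

theorem mapSet_mapSet (f g : Term → Term) (A : Set Atom) :
    mapSet g (mapSet f A) = (Atom.map g ∘ Atom.map f) '' A :=
  (Set.image_comp _ _ _).symm

theorem isHom_iff_mapSet_subset :
    isHom h A I ↔ (∀ c : ℕ, h (.const c) = .const c) ∧ mapSet h A ⊆ I :=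
  and_congr_right' Set.image_subset_iff.symm

theorem isHom_sdiff_iff {S : Set Atom} :
    isHom h A (I \ S) ↔ isHom h A I ∧ Disjoint (mapSet h A) S := by
  rw [isHom_iff_mapSet_subset, isHom_iff_mapSet_subset, Set.subset_sdiff, and_assoc]

theorem isAltMatch.of_isHom {ρ : Rule} {J : Set Atom} {h' hA : Term → Term}
    (halt : isAltMatch ρ h h' I hA) (hom : isHom hA (mapSet h' ↑ρ.head) J) :
    isAltMatch ρ h h' J hA :=
  ⟨hom, halt.2⟩

end Homomorphisms

theorem alt_match_partition_general
    {A B I : Set Atom} {f g h : Term → Term}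
    (hom : isHom h (mapSet f A) I) (not_hom : ¬ isHom h (mapSet f A) (I \ mapSet g B)) :
    ∃ A₁ A₂ B₁ B₂ : Set Atom,
      A₁ ∪ A₂ = A ∧ A₁ ∩ A₂ = ∅ ∧ B₁ ∪ B₂ = B ∧ B₁ ∩ B₂ = ∅ ∧
      A₁.Nonempty ∧ mapSet h (mapSet f A₁) = mapSet g B₁ ∧
      mapSet h (mapSet f A₂) ⊆ I \ mapSet g B := by
  have image_subset : mapSet h (mapSet f A) ⊆ I := (isHom_iff_mapSet_subset.mp hom).2
  have images_meet : ¬ Disjoint (mapSet h (mapSet f A)) (mapSet g B) :=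
    fun hdisj => not_hom (isHom_sdiff_iff.mpr ⟨hom, hdisj⟩)
  simp only [mapSet_mapSet] at image_subset images_meet ⊢
  exact exists_partition_image_eq_image image_subset images_meet

/-- if hA is an alternative match of h₂' and ρ₂ on Ib that is not
an alternative match on Ĩb = Ib ∖ h₁'(head(ρ₁)), then head(ρ₂) and head(ρ₁) can
be partitioned as H₂ ∪ H̄₂ and H₁ ∪ H̄₁ with H₂ nonempty,
hA(h₂'(H₂)) = h₁'(H₁) and hA(h₂'(H̄₂)) ⊆ Ĩb. -/
theorem alt_match_partition
    (ρ₁ ρ₂ : Rule) (hwf₁ : ρ₁.wf) (hwf₂ : ρ₂.wf)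
    (Ia Ib Ja Jb : Set Atom) (h₁ h₁' h₂ h₂' hA : Term → Term)
    (hsub : Ia ⊆ Ib)
    (hb : obtainedBy ρ₁ Jb h₁ h₁' Ib)
    (ha : obtainedBy ρ₂ Ja h₂ h₂' Ia)
    (halt : isAltMatch ρ₂ h₂ h₂' Ib hA)
    (hnalt : ¬ isAltMatch ρ₂ h₂ h₂' (Ib \ mapSet h₁' ↑ρ₁.head) hA) :
    ∃ H₂ H₂bar H₁ H₁bar : Set Atom,
      H₂ ∪ H₂bar = (↑ρ₂.head : Set Atom) ∧ H₂ ∩ H₂bar = ∅ ∧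
      H₁ ∪ H₁bar = (↑ρ₁.head : Set Atom) ∧ H₁ ∩ H₁bar = ∅ ∧
      H₂.Nonempty ∧
      mapSet hA (mapSet h₂' H₂) = mapSet h₁' H₁ ∧
      mapSet hA (mapSet h₂' H₂bar) ⊆ Ib \ mapSet h₁' ↑ρ₁.head :=
  alt_match_partition_general halt.1 fun hom => hnalt (halt.of_isHom hom)
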